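/- Let α > 0 and let (L_n) be a sequence of integers with L_n ≥ 2 for all n (in particular this holds eventually when L_n → ∞ as n → ∞, as assumed in Proposition A.2). For each n, let G_n and H_n be independent random variables with G_n ~ Gamma(α, 1) and H_n ~ Gamma(L_n, L_n/n), and set V_n = G_n/(G_n + H_n). Then √n · V_n → 0 in probability as n → ∞; equivalently, for every ε > 0, the product measure Gamma(α, 1) ⊗ Gamma(L_n, L_n/n) of the set {(g, h) ∈ (0,∞)² : √n · g/(g + h) > ε} tends to 0 as n → ∞. -/

import Mathlib

open MeasureTheory ProbabilityTheory Filter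

lemma aux_meas (a r : ℝ) : Measurable (gammaPDF a r) :=
  (measurable_gammaPDFReal a r).ennreal_ofReal

lemma aux_pos (a r : ℝ) : ∀ᵐ x ∂(gammaMeasure a r), 0 < x := by
  rw [gammaMeasure, ae_withDensity_iff (aux_meas a r)]
  filter_upwards [Measure.ae_ne volume (0 : ℝ)] with x hx h
  by_contra hn
  exact h (gammaPDF_of_neg (lt_of_le_of_ne (not_lt.mp hn) hx))

lemma aux_mean {a r : ℝ} (ha : 0 < a) (hr : 0 < r) :
    ∫⁻ x, ENNReal.ofReal x ∂(gammaMeasure a r) = ENNReal.ofReal (a / r) := by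
  rw [gammaMeasure, lintegral_withDensity_eq_lintegral_mul _ (aux_meas a r)
    ENNReal.measurable_ofReal]
  have : ∫⁻ x, (gammaPDF a r * ENNReal.ofReal) x
      = ∫⁻ x, ENNReal.ofReal (a / r) * gammaPDF (a + 1) r x := by
    apply lintegral_congr_ae
    filter_upwards [Measure.ae_ne volume (0 : ℝ)] with x hx
    rcases lt_or_gt_of_ne hx with h | h
    · simp [gammaPDF_of_neg h]
    · have hG := Real.Gamma_pos_of_pos ha
      rw [Pi.mul_apply, gammaPDF_of_nonneg h.le, gammaPDF_of_nonneg h.le,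
        ← ENNReal.ofReal_mul (by positivity), ← ENNReal.ofReal_mul (by positivity),
        Real.Gamma_add_one ha.ne', Real.rpow_add_one hr.ne', add_sub_cancel_right,
        Real.rpow_sub_one hx]
      congr 1
      field_simp
  rw [this, lintegral_const_mul _ (aux_meas _ _), lintegral_gammaPDF_eq_one (by linarith) hr,
    mul_one]

lemma aux_inv {a r : ℝ} (ha : 0 < a) (hr : 0 < r) :
    ∫⁻ x, ENNReal.ofReal x⁻¹ ∂(gammaMeasure (a + 1) r) = ENNReal.ofReal (r / a) := by
  rw [gammaMeasure, lintegral_withDensity_eq_lintegral_mul _ (aux_meas _ r)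
    (by fun_prop)]
  have : ∫⁻ x, (gammaPDF (a + 1) r * fun x => ENNReal.ofReal x⁻¹) x
      = ∫⁻ x, ENNReal.ofReal (r / a) * gammaPDF a r x := by
    apply lintegral_congr_ae
    filter_upwards [Measure.ae_ne volume (0 : ℝ)] with x hx
    rcases lt_or_gt_of_ne hx with h | h
    · simp [gammaPDF_of_neg h]
    · have hG := Real.Gamma_pos_of_pos ha
      have hG' := Real.Gamma_pos_of_pos (show 0 < a + 1 by linarith)
      rw [Pi.mul_apply, gammaPDF_of_nonneg h.le, gammaPDF_of_nonneg h.le,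
        ← ENNReal.ofReal_mul (by positivity), ← ENNReal.ofReal_mul (by positivity),
        Real.Gamma_add_one ha.ne', Real.rpow_add_one hr.ne', add_sub_cancel_right,
        Real.rpow_sub_one hx]
      congr 1
      field_simp
  rw [this, lintegral_const_mul _ (aux_meas _ _), lintegral_gammaPDF_eq_one ha hr, mul_one]

lemma aux_bound (α : ℝ) (hα : 0 < α) (l : ℕ) (hl : 2 ≤ l) (ε : ℝ) (hε : 0 < ε) (n : ℕ)
    (hn : 0 < n) :
    ((gammaMeasure α 1).prod (gammaMeasure l ((l : ℝ) / n)))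
      {p : ℝ × ℝ | ε < Real.sqrt n * (p.1 / (p.1 + p.2))}
      ≤ ENNReal.ofReal (2 * α / ε / Real.sqrt n) := by
  have hn' : (0 : ℝ) < n := by exact_mod_cast hn
  have hl' : (2 : ℝ) ≤ l := by exact_mod_cast hl
  have hr : (0 : ℝ) < (l : ℝ) / n := by positivity
  have hs : 0 < Real.sqrt n := Real.sqrt_pos.mpr hn'
  have := isProbabilityMeasure_gammaMeasure hα one_pos
  have := isProbabilityMeasure_gammaMeasure (show (0 : ℝ) < l by linarith) hr
  set μ := gammaMeasure α 1 with hμ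
  set ν := gammaMeasure l ((l : ℝ) / n) with hν
  have e1 : ∫⁻ p, ENNReal.ofReal p.1 * ENNReal.ofReal p.2⁻¹ ∂(μ.prod ν)
      = ENNReal.ofReal (α * ((l / n) / (l - 1))) := by
    rw [lintegral_prod_mul (f := fun x => ENNReal.ofReal x) (g := fun x => ENNReal.ofReal x⁻¹)
      (by fun_prop) (by fun_prop), hμ, aux_mean hα one_pos, hν]
    have := aux_inv (a := (l : ℝ) - 1) (by linarith) hr
    rw [sub_add_cancel] at this
    rw [this, div_one, ← ENNReal.ofReal_mul hα.le]
  have p1 : ∀ᵐ p ∂(μ.prod ν), 0 < p.1 :=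
    Measure.quasiMeasurePreserving_fst.ae (aux_pos _ _)
  have p2 : ∀ᵐ p ∂(μ.prod ν), 0 < p.2 :=
    Measure.quasiMeasurePreserving_snd.ae (aux_pos _ _)
  calc _ ≤ (μ.prod ν) {p | ENNReal.ofReal (ε / Real.sqrt n)
            ≤ ENNReal.ofReal p.1 * ENNReal.ofReal p.2⁻¹} := by
        apply measure_mono_ae
        filter_upwards [p1, p2] with p h1 h2 h
        change ε < _ at h
        change _ ≤ _
        rw [← ENNReal.ofReal_mul h1.le]
        apply ENNReal.ofReal_le_ofReal
        rw [div_le_iff₀' hs]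
        refine h.le.trans ?_
        rw [← div_eq_mul_inv]
        gcongr
        linarith
    _ ≤ (∫⁻ p, ENNReal.ofReal p.1 * ENNReal.ofReal p.2⁻¹ ∂(μ.prod ν))
          / ENNReal.ofReal (ε / Real.sqrt n) :=
        meas_ge_le_lintegral_div (by fun_prop) (by simp; positivity) ENNReal.ofReal_ne_top
    _ ≤ _ := by
        rw [e1, ← ENNReal.ofReal_div_of_pos (by positivity)]
        apply ENNReal.ofReal_le_ofReal
        have h2 : (l : ℝ) / (l - 1) ≤ 2 := by
          rw [div_le_iff₀ (by linarith)]; linarith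
        have hq : Real.sqrt n * Real.sqrt n = n := Real.mul_self_sqrt hn'.le
        have : α * ((l / n) / (l - 1)) / (ε / Real.sqrt n)
            = (l / (l - 1)) * α / ε / Real.sqrt n := by
          have : (l : ℝ) - 1 ≠ 0 := by linarith
          nth_rewrite 1 [← hq]
          field_simp
        rw [this]
        gcongr

/-- For `α > 0` and a sequence of integers `L n ≥ 2`, let `G_n ∼ Gamma(α, 1)` and
`H_n ∼ Gamma(L n, L n / n)` be independent, and `V_n = G_n / (G_n + H_n)`.
Then `√n ⬝ V_n → 0` in probability: for every `ε > 0`, the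
`Gamma(α, 1) ⊗ Gamma(L n, L n / n)`-measure of
`{(g, h) | √n ⬝ g / (g + h) > ε}` tends to `0` as `n → ∞`. -/
theorem sqrt_n_mul_gamma_ratio_tendsto_zero_in_probability
    (α : ℝ) (hα : 0 < α) (L : ℕ → ℕ) (hL : ∀ n, 2 ≤ L n) (ε : ℝ) (hε : 0 < ε) :
    Tendsto
      (fun n : ℕ =>
        ((gammaMeasure α 1).prod (gammaMeasure (L n) ((L n : ℝ) / n)))
          {p : ℝ × ℝ | ε < Real.sqrt n * (p.1 / (p.1 + p.2))})
      atTop (nhds 0) := by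
  have ht : Tendsto (fun n : ℕ => ENNReal.ofReal (2 * α / ε / Real.sqrt n)) atTop (nhds 0) := by
    rw [← ENNReal.ofReal_zero]
    apply ENNReal.tendsto_ofReal
    exact tendsto_const_nhds.div_atTop
      (Real.tendsto_sqrt_atTop.comp tendsto_natCast_atTop_atTop)
  refine tendsto_of_tendsto_of_tendsto_of_le_of_le' tendsto_const_nhds ht
    (Eventually.of_forall fun _ => zero_le) ?_
  filter_upwards [eventually_gt_atTop 0] with n hn
  exact aux_bound α hα (L n) (hL n) ε hε n hn
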